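/- For every θ ∈ [1/4, 1/2] and every real x with 0 ≤ x ≤ 1/θ, the polynomial Q_θ(x) = (12θ⁴ − 28θ³ + 14θ² − 2θ)·x² + (−24θ³ + 36θ² − 12θ + 1)·x + 12θ² − 12θ + 2 satisfies Q_θ(x) ≤ 0. -/

import Mathlib

/-! The quadratics `(1 - θx)²`, `(1 - θx)x` and `x²` are, up to scaling, the Bernstein basis of
degree 2 on `[0, 1/θ]`, so a polynomial whose coefficients in this basis are nonpositive is
nonpositive on that interval. -/

theorem quadratic_form_nonpos_of_coeff_nonpos {R : Type*} [Semiring R] [PartialOrder R]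
    [IsOrderedRing R] {a b c s t : R} (ha : a ≤ 0) (hb : b ≤ 0) (hc : c ≤ 0)
    (hs : 0 ≤ s) (ht : 0 ≤ t) :
    a * s ^ 2 + b * (s * t) + c * t ^ 2 ≤ 0 :=
  add_nonpos
    (add_nonpos (mul_nonpos_of_nonpos_of_nonneg ha (pow_nonneg hs 2))
      (mul_nonpos_of_nonpos_of_nonneg hb (mul_nonneg hs ht)))
    (mul_nonpos_of_nonpos_of_nonneg hc (pow_nonneg ht 2))

theorem Qtheta_eq_bernstein_expansion {R : Type*} [CommRing R] (θ x : R) :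
    (12 * θ ^ 4 - 28 * θ ^ 3 + 14 * θ ^ 2 - 2 * θ) * x ^ 2
        + (-24 * θ ^ 3 + 36 * θ ^ 2 - 12 * θ + 1) * x + (12 * θ ^ 2 - 12 * θ + 2) =
      (12 * θ ^ 2 - 12 * θ + 2) * (1 - θ * x) ^ 2
        + -((1 - 2 * θ) * (6 * θ - 1)) * ((1 - θ * x) * x)
        + -(θ * (1 - 2 * θ) ^ 2) * x ^ 2 := by
  ring

theorem Qtheta_nonpos_general {K : Type*} [Field K] [LinearOrder K] [IsStrictOrderedRing K]
    {θ x : K} (hQ_zero : 12 * θ ^ 2 - 12 * θ + 2 ≤ 0) (hθ : θ ≤ 1 / 2)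
    (hx : x ∈ Set.Icc 0 (1 / θ)) :
    (12 * θ ^ 4 - 28 * θ ^ 3 + 14 * θ ^ 2 - 2 * θ) * x ^ 2
      + (-24 * θ ^ 3 + 36 * θ ^ 2 - 12 * θ + 1) * x
      + (12 * θ ^ 2 - 12 * θ + 2) ≤ 0 := by
  obtain ⟨hx_nonneg, hx_le⟩ := hx
  have hθ_sixth : 1 / 6 ≤ θ := by linarith [sq_nonneg θ]
  have hθ_pos : 0 < θ := by linarith
  have hθx : θ * x ≤ 1 := (le_div_iff₀' hθ_pos).mp hx_le
  have h_mixed : 0 ≤ (1 - 2 * θ) * (6 * θ - 1) := mul_nonneg (by linarith) (by linarith)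
  have h_right : 0 ≤ θ * (1 - 2 * θ) ^ 2 := mul_nonneg hθ_pos.le (sq_nonneg _)
  rw [Qtheta_eq_bernstein_expansion]
  exact quadratic_form_nonpos_of_coeff_nonpos hQ_zero (neg_nonpos.mpr h_mixed)
    (neg_nonpos.mpr h_right) (sub_nonneg.mpr hθx) hx_nonneg

/-- For every θ ∈ [1/4, 1/2] and every real x with 0 ≤ x ≤ 1/θ, the
polynomial Q_θ(x) satisfies Q_θ(x) ≤ 0. -/
theorem Qtheta_nonpos (θ : ℝ) (hθ : θ ∈ Set.Icc (1/4 : ℝ) (1/2))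
    (x : ℝ) (hx : x ∈ Set.Icc (0 : ℝ) (1/θ)) :
    (12*θ^4 - 28*θ^3 + 14*θ^2 - 2*θ) * x^2
      + (-24*θ^3 + 36*θ^2 - 12*θ + 1) * x
      + (12*θ^2 - 12*θ + 2) ≤ 0 := by
  have hQ_zero : 12 * θ ^ 2 - 12 * θ + 2 ≤ 0 := by nlinarith [hθ.1, hθ.2]
  exact Qtheta_nonpos_general hQ_zero hθ.2 hx
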